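/- arXiv:2303.02557 — 2 statements merged into one kernel-verified Lean document; each statement's English description precedes it below -/
import Mathlib

section
/- Let Q be the optimal Q-function for reward r, and let f : ℝ → ℝ satisfy: (1) f is concave; (2i) f(x+y) ≥ f(x) + f(y) for all x, y; (2ii) f(γx) ≥ γ·f(x) for all x; (3) f(max_{a∈A} 𝒬(s,a)) ≥ max_{a∈A} f(𝒬(s,a)) for every function 𝒬 : S × A → ℝ and every s ∈ S. Define V_f(s) = max_{a∈A} f(Q(s,a)) and r̂_C(s,a) = f(Q(s,a)) − f(r(s,a)) − γ·∑_{s'} p(s'|s,a)·V_f(s'), and let Ĉ be the optimal Q-function for reward r̂_C. If Q̃ is the optimal Q-function for the transformed reward (s,a) ↦ f(r(s,a)), then for all (s,a): f(Q(s,a)) − Ĉ(s,a) ≤ Q̃(s,a) ≤ f(Q(s,a)). -/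
/-!
The Bellman optimality operator is monotone and contracts nonnegative constant shifts by `γ`, so on
finite state and action sets every subsolution lies below every supersolution. Write `B ρ` for the
operator with reward `ρ`. Superhomogeneity forces `0 ≤ f 0`, so Jensen's inequality holds for the
weights `γ p(·|s,a)`, whose total mass may be less than one; together with superadditivity and the
condition on maxima it makes `f ∘ Q` a supersolution for the reward `f ∘ r`, hence `Q̃ ≤ f ∘ Q`.
For the lower bound, `r̂_C = f ∘ Q - B (f ∘ r) (f ∘ Q)`, so `f ∘ Q` solves the equation with reward
`f ∘ r + r̂_C`, while `Q̃ + Ĉ` is a supersolution of it because the maximum is subadditive; hence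
`f ∘ Q ≤ Q̃ + Ĉ`.
-/

open Finset

/-- Maximum of a real-valued function over a nonempty finite action set. -/
noncomputable def amax {A : Type*} [Fintype A] [Nonempty A] (g : A → ℝ) : ℝ :=
  Finset.univ.sup' Finset.univ_nonempty g

section Maximum

variable {A : Type*} [Fintype A] [Nonempty A]

lemma le_amax (g : A → ℝ) (a : A) : g a ≤ amax g :=
  le_sup' g (mem_univ a)

lemma amax_le {g : A → ℝ} {c : ℝ} (h : ∀ a, g a ≤ c) : amax g ≤ c :=
  sup'_le _ _ fun a _ => h a

lemma amax_mono : Monotone (amax : (A → ℝ) → ℝ) :=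
  fun _ h hgh => amax_le fun a => (hgh a).trans (le_amax h a)

lemma amax_add_le (g h : A → ℝ) : amax (g + h) ≤ amax g + amax h :=
  amax_le fun a => add_le_add (le_amax g a) (le_amax h a)

lemma amax_const (c : ℝ) : amax (fun _ : A => c) = c :=
  sup'_const _ c

end Maximum

lemma sum_smul_map_le_of_concaveOn_of_sum_le_one {𝕜 E β ι : Type*} [Field 𝕜] [LinearOrder 𝕜]
    [IsStrictOrderedRing 𝕜] [AddCommGroup E] [AddCommGroup β] [PartialOrder β]
    [IsOrderedAddMonoid β] [Module 𝕜 E] [Module 𝕜 β] [IsStrictOrderedModule 𝕜 β]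
    {s : Set E} {f : E → β} {t : Finset ι} {w : ι → 𝕜} {x : ι → E}
    (hf : ConcaveOn 𝕜 s f) (hs : 0 ∈ s) (hf0 : 0 ≤ f 0) (hw : ∀ i ∈ t, 0 ≤ w i)
    (hw1 : ∑ i ∈ t, w i ≤ 1) (hx : ∀ i ∈ t, x i ∈ s) :
    ∑ i ∈ t, w i • f (x i) ≤ f (∑ i ∈ t, w i • x i) := by
  -- the missing mass is placed at the origin
  have hdefect : 0 ≤ 1 - ∑ i ∈ t, w i := sub_nonneg.2 hw1
  calc ∑ i ∈ t, w i • f (x i)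
      ≤ (1 - ∑ i ∈ t, w i) • f 0 + ∑ i ∈ t, w i • f (x i) :=
        le_add_of_nonneg_left (smul_nonneg hdefect hf0)
    _ ≤ f ((1 - ∑ i ∈ t, w i) • 0 + ∑ i ∈ t, w i • x i) :=
        hf.map_add_sum_le hw (sub_add_cancel _ _) hx hdefect hs
    _ = f (∑ i ∈ t, w i • x i) := by rw [smul_zero, zero_add]

lemma map_zero_nonneg_of_mul_map_le {γ : ℝ} (hγ1 : γ < 1) {f : ℝ → ℝ}
    (hf : ∀ x, γ * f x ≤ f (γ * x)) : 0 ≤ f 0 := by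
  have hf_zero : γ * f 0 ≤ f 0 := by simpa only [mul_zero] using hf 0
  nlinarith

/-- The Bellman optimality operator with transition weights `p`, discount `γ` and reward `r`; the
optimal `Q`-functions are its fixed points, subsolutions satisfy `Q ≤ bellman p γ r Q` and
supersolutions the reverse inequality. -/
noncomputable def bellman {S A : Type*} [Fintype S] [Fintype A] [Nonempty A]
    (p : S → A → S → ℝ) (γ : ℝ) (r Q : S → A → ℝ) (s : S) (a : A) : ℝ :=
  r s a + γ * ∑ s', p s a s' * amax (Q s')

section Bellman

variable {S A : Type*} [Fintype S] [Fintype A] [Nonempty A] {p : S → A → S → ℝ} {γ : ℝ}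

lemma bellman_mono (hp_nonneg : ∀ s a s', 0 ≤ p s a s') (hγ0 : 0 ≤ γ) (r : S → A → ℝ) :
    Monotone (bellman p γ r) := by
  intro U V hUV s a
  unfold bellman
  gcongr with s'
  · exact hp_nonneg s a s'
  · exact amax_mono (hUV s')

lemma bellman_add_le (hp_nonneg : ∀ s a s', 0 ≤ p s a s') (hγ0 : 0 ≤ γ)
    (r₁ r₂ Q₁ Q₂ : S → A → ℝ) :
    bellman p γ (r₁ + r₂) (Q₁ + Q₂) ≤ bellman p γ r₁ Q₁ + bellman p γ r₂ Q₂ := by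
  intro s a
  calc bellman p γ (r₁ + r₂) (Q₁ + Q₂) s a
      ≤ r₁ s a + r₂ s a + γ * ∑ s', p s a s' * (amax (Q₁ s') + amax (Q₂ s')) := by
        simp only [bellman, Pi.add_apply]
        gcongr with s'
        · exact hp_nonneg s a s'
        · exact amax_add_le (Q₁ s') (Q₂ s')
    _ = bellman p γ r₁ Q₁ s a + bellman p γ r₂ Q₂ s a := by
        simp only [bellman, mul_add, sum_add_distrib]
        ring

lemma bellman_add_const_le (hp_nonneg : ∀ s a s', 0 ≤ p s a s')
    (hp_sum : ∀ s a, ∑ s', p s a s' ≤ 1) (hγ0 : 0 ≤ γ) (r Q : S → A → ℝ) {c : ℝ} (hc : 0 ≤ c)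
    (s : S) (a : A) :
    bellman p γ r (Q + fun _ _ => c) s a ≤ bellman p γ r Q s a + γ * c := by
  calc bellman p γ r (Q + fun _ _ => c) s a
      = bellman p γ (r + 0) (Q + fun _ _ => c) s a := by rw [add_zero]
    _ ≤ bellman p γ r Q s a + bellman p γ 0 (fun _ _ => c) s a :=
        bellman_add_le hp_nonneg hγ0 r 0 Q (fun _ _ => c) s a
    _ = bellman p γ r Q s a + γ * ((∑ s', p s a s') * c) := by
        simp only [bellman, amax_const, sum_mul, Pi.zero_apply, zero_add]
    _ ≤ bellman p γ r Q s a + γ * c := by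
        gcongr
        exact mul_le_of_le_one_left hc (hp_sum s a)

theorem le_of_le_bellman_of_bellman_le (hp_nonneg : ∀ s a s', 0 ≤ p s a s')
    (hp_sum : ∀ s a, ∑ s', p s a s' ≤ 1) (hγ0 : 0 ≤ γ) (hγ1 : γ < 1) {r U V : S → A → ℝ}
    (hU : U ≤ bellman p γ r U) (hV : bellman p γ r V ≤ V) : U ≤ V := by
  intro s a
  by_contra! hlt
  have : Nonempty S := ⟨s⟩
  obtain ⟨⟨s₀, a₀⟩, hmax⟩ := Finite.exists_max fun x : S × A => U x.1 x.2 - V x.1 x.2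
  set M := U s₀ a₀ - V s₀ a₀
  have hM_pos : 0 < M := (sub_pos.2 hlt).trans_le (hmax (s, a))
  have hU_le : U ≤ V + fun _ _ => M := fun s' a' => sub_le_iff_le_add'.1 (hmax (s', a'))
  have hshift : U s₀ a₀ ≤ V s₀ a₀ + γ * M :=
    calc U s₀ a₀ ≤ bellman p γ r U s₀ a₀ := hU s₀ a₀
      _ ≤ bellman p γ r (V + fun _ _ => M) s₀ a₀ := bellman_mono hp_nonneg hγ0 r hU_le s₀ a₀
      _ ≤ bellman p γ r V s₀ a₀ + γ * M :=
        bellman_add_const_le hp_nonneg hp_sum hγ0 r V hM_pos.le s₀ a₀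
      _ ≤ V s₀ a₀ + γ * M := by gcongr; exact hV s₀ a₀
  have hcontract : γ * M < M := mul_lt_of_lt_one_left hM_pos hγ1
  linarith

theorem le_add_of_bellman_residual_le (hp_nonneg : ∀ s a s', 0 ≤ p s a s')
    (hp_sum : ∀ s a, ∑ s', p s a s' ≤ 1) (hγ0 : 0 ≤ γ) (hγ1 : γ < 1) {r U Q C : S → A → ℝ}
    (hQ : bellman p γ r Q ≤ Q) (hC : bellman p γ (U - bellman p γ r U) C ≤ C) : U ≤ Q + C := by
  have hU : U = bellman p γ (r + (U - bellman p γ r U)) U := by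
    ext s a
    simp only [bellman, Pi.add_apply, Pi.sub_apply]
    ring
  have hsuper : bellman p γ (r + (U - bellman p γ r U)) (Q + C) ≤ Q + C :=
    (bellman_add_le hp_nonneg hγ0 _ _ Q C).trans (add_le_add hQ hC)
  exact le_of_le_bellman_of_bellman_le hp_nonneg hp_sum hγ0 hγ1 hU.le hsuper

theorem bellman_comp_le_comp (hp_nonneg : ∀ s a s', 0 ≤ p s a s')
    (hp_sum : ∀ s a, ∑ s', p s a s' ≤ 1) (hγ0 : 0 ≤ γ) (hγ1 : γ ≤ 1) {r Q : S → A → ℝ}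
    (hQ : Q = bellman p γ r Q) {f : ℝ → ℝ} (hf_concave : ConcaveOn ℝ Set.univ f)
    (hf_superadd : ∀ x y, f x + f y ≤ f (x + y)) (hf_zero : 0 ≤ f 0)
    (hf_max : ∀ s, amax (fun a => f (Q s a)) ≤ f (amax (Q s))) :
    bellman p γ (fun s a => f (r s a)) (fun s a => f (Q s a)) ≤ fun s a => f (Q s a) := by
  intro s a
  have hweight_sum : ∑ s', γ * p s a s' ≤ 1 := by
    rw [← mul_sum]
    exact mul_le_one₀ hγ1 (sum_nonneg fun s' _ => hp_nonneg s a s') (hp_sum s a)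
  have hjensen : γ * ∑ s', p s a s' * f (amax (Q s')) ≤ f (γ * ∑ s', p s a s' * amax (Q s')) := by
    simpa only [smul_eq_mul, mul_assoc, ← mul_sum] using
      sum_smul_map_le_of_concaveOn_of_sum_le_one hf_concave (Set.mem_univ 0) hf_zero
        (fun s' _ => mul_nonneg hγ0 (hp_nonneg s a s')) hweight_sum
        (fun s' _ => Set.mem_univ (amax (Q s')))
  calc f (r s a) + γ * ∑ s', p s a s' * amax (fun a' => f (Q s' a'))
      ≤ f (r s a) + γ * ∑ s', p s a s' * f (amax (Q s')) := by
        gcongr with s'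
        · exact hp_nonneg s a s'
        · exact hf_max s'
    _ ≤ f (r s a) + f (γ * ∑ s', p s a s' * amax (Q s')) := by gcongr
    _ ≤ f (bellman p γ r Q s a) := hf_superadd _ _
    _ = f (Q s a) := by rw [← hQ]

theorem concave_conditions_standard_rl_general (hp_nonneg : ∀ s a s', 0 ≤ p s a s')
    (hp_sum : ∀ s a, ∑ s', p s a s' ≤ 1) (hγ0 : 0 ≤ γ) (hγ1 : γ < 1) {r Q C Qt : S → A → ℝ}
    (hQ : Q = bellman p γ r Q) {f : ℝ → ℝ} (hf_concave : ConcaveOn ℝ Set.univ f)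
    (hf_superadd : ∀ x y, f x + f y ≤ f (x + y)) (hf_zero : 0 ≤ f 0)
    (hf_max : ∀ s, amax (fun a => f (Q s a)) ≤ f (amax (Q s)))
    (hC : C = bellman p γ (fun s a => f (Q s a) - f (r s a) -
      γ * ∑ s', p s a s' * amax (fun a' => f (Q s' a'))) C)
    (hQt : Qt = bellman p γ (fun s a => f (r s a)) Qt) (s : S) (a : A) :
    f (Q s a) - C s a ≤ Qt s a ∧ Qt s a ≤ f (Q s a) := by
  have hresidual : C = bellman p γ ((fun s a => f (Q s a)) -
      bellman p γ (fun s a => f (r s a)) (fun s a => f (Q s a))) C := by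
    simpa only [sub_sub] using! hC
  have hlower : (fun s a => f (Q s a)) ≤ Qt + C :=
    le_add_of_bellman_residual_le hp_nonneg hp_sum hγ0 hγ1 hQt.ge hresidual.ge
  have hupper : Qt ≤ fun s a => f (Q s a) :=
    le_of_le_bellman_of_bellman_le hp_nonneg hp_sum hγ0 hγ1 hQt.le
      (bellman_comp_le_comp hp_nonneg hp_sum hγ0 hγ1.le hQ hf_concave hf_superadd hf_zero hf_max)
  exact ⟨sub_le_iff_le_add.2 (hlower s a), hupper s a⟩

end Bellman

/-- **Concave conditions, standard RL (Lemma 4.3).** -/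
theorem concave_conditions_standard_rl
    {S A : Type*} [Fintype S] [Fintype A] [Nonempty S] [Nonempty A]
    (p : S → A → S → ℝ)
    (hp_nonneg : ∀ s a s', 0 ≤ p s a s')
    (hp_sum : ∀ s a, ∑ s', p s a s' = 1)
    (γ : ℝ) (hγ0 : 0 < γ) (hγ1 : γ < 1)
    (r : S → A → ℝ)
    -- Q is the optimal Q-function for reward r
    (Q : S → A → ℝ)
    (hQ : ∀ s a, Q s a = r s a + γ * ∑ s', p s a s' * amax (fun a' => Q s' a'))
    -- the transformation function f and its conditions
    (f : ℝ → ℝ)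
    (hf_concave : ConcaveOn ℝ Set.univ f)
    (hf_superadd : ∀ x y, f x + f y ≤ f (x + y))
    (hf_superhom : ∀ x, γ * f x ≤ f (γ * x))
    (hf_max : ∀ (𝒬 : S → A → ℝ) (s : S),
      amax (fun a => f (𝒬 s a)) ≤ f (amax (fun a => 𝒬 s a)))
    -- V_f, the auxiliary reward r̂_C, and Ĉ the optimal Q-function for r̂_C
    (Vf : S → ℝ)
    (hVf : ∀ s, Vf s = amax (fun a => f (Q s a)))
    (rCh : S → A → ℝ)
    (hrCh : ∀ s a, rCh s a = f (Q s a) - f (r s a) - γ * (∑ s', p s a s' * Vf s'))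
    (Ch : S → A → ℝ)
    (hCh : ∀ s a, Ch s a = rCh s a + γ * ∑ s', p s a s' * amax (fun a' => Ch s' a'))
    -- Q̃ is the optimal Q-function for the transformed reward f ∘ r
    (Qt : S → A → ℝ)
    (hQt : ∀ s a, Qt s a = f (r s a) + γ * ∑ s', p s a s' * amax (fun a' => Qt s' a')) :
    ∀ s a, f (Q s a) - Ch s a ≤ Qt s a ∧ Qt s a ≤ f (Q s a) := by
  obtain ⟨rfl, rfl⟩ : Vf = _ ∧ rCh = _ := ⟨funext hVf, funext₂ hrCh⟩
  exact concave_conditions_standard_rl_general hp_nonneg (fun s a => (hp_sum s a).le) hγ0.le hγ1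
    (funext₂ hQ) hf_concave hf_superadd (map_zero_nonneg_of_mul_map_le hγ1 hf_superhom) (hf_max Q)
    (funext₂ hCh) (funext₂ hQt)
end

section
/- Let Q be the optimal soft Q-function for reward r, let f : ℝ → ℝ satisfy: (1) f is concave; (2i) f(x+y) ≥ f(x) + f(y); (2ii) f(γx) ≥ γ·f(x); (3) f(log ∑_a π₀(a|s)·exp 𝒬(s,a)) ≥ log ∑_a π₀(a|s)·exp f(𝒬(s,a)) for every 𝒬 : S × A → ℝ and every s, and let Q̃ be the optimal soft Q-function for reward (s,a) ↦ f(r(s,a)). Define V_f(s) = log ∑_a π₀(a|s)·exp f(Q(s,a)), let Ĉ satisfy Ĉ(s,a) = f(Q(s,a)) − f(r(s,a)) − γ·∑_{s'} p(s'|s,a)·V_f(s') + γ·∑_{s'} p(s'|s,a)·max_{a'} Ĉ(s',a'), and define the policy π_f(a|s) = π₀(a|s)·exp(f(Q(s,a)) − V_f(s)). Let Q̃^{π_f} be the soft value of π_f on the transformed task, i.e. the function satisfying Q̃^{π_f}(s,a) = f(r(s,a)) + γ·∑_{s'} p(s'|s,a)·∑_{a'} π_f(a'|s')·[Q̃^{π_f}(s',a')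 − log(π_f(a'|s')/π₀(a'|s'))], and let D̂ satisfy D̂(s,a) = γ·∑_{s'} p(s'|s,a)·∑_{a'} π_f(a'|s')·(Ĉ(s',a') + D̂(s',a')). Then for all (s,a): Q̃(s,a) − Q̃^{π_f}(s,a) ≤ D̂(s,a). -/
open Finset

/-- The soft (log-sum-exp) value of `g` under the prior action distribution `π0`. -/
noncomputable def softV {A : Type*} [Fintype A] (π0 : A → ℝ) (g : A → ℝ) : ℝ :=
  Real.log (∑ a, π0 a * Real.exp (g a))

/-!
The conditions on `f` make `U = f ∘ Q` a supersolution of the soft Bellman equation of the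
transformed task, whence `Q̃ ≤ U`. The fixed point `Ĉ` accumulates the residual of this
supersolution along greedy actions, which gives `U ≤ Q̃ + Ĉ`. The policy `π_f` is the Gibbs policy
of `U`, and by the Gibbs variational identity it attains the soft value of `U`. At each state the
soft value of `Q̃` is therefore at most the regularized value of `Q̃ + Ĉ` under `π_f`, so `Q̃` is a
subsolution of the equation solved by `Q̃^{π_f} + D̂`. All three inequalities follow from one
comparison principle for discounted Bellman equations.
-/

section SoftValue

variable {A : Type*} [Fintype A] {w g k : A → ℝ}

-- `0 < w` refers to the pointwise order on functions: `w` is nonnegative and not identically zero.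
lemma sum_mul_exp_pos (hw : 0 < w) (g : A → ℝ) : 0 < ∑ a, w a * Real.exp (g a) := by
  obtain ⟨hw_nonneg, a, ha⟩ := Pi.lt_def.mp hw
  exact Finset.sum_pos' (fun b _ => mul_nonneg (hw_nonneg b) (Real.exp_pos _).le)
    ⟨a, Finset.mem_univ a, mul_pos ha (Real.exp_pos _)⟩

lemma softV_mono (hw : 0 < w) (h : g ≤ k) : softV w g ≤ softV w k :=
  Real.log_le_log (sum_mul_exp_pos hw g) <| Finset.sum_le_sum fun a _ =>
    mul_le_mul_of_nonneg_left (Real.exp_le_exp.mpr (h a)) (hw.le a)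

lemma softV_add_const (hw : 0 < w) (g : A → ℝ) (c : ℝ) :
    softV w (fun a => g a + c) = softV w g + c := by
  simp only [softV, Real.exp_add, ← mul_assoc, ← Finset.sum_mul]
  rw [Real.log_mul (sum_mul_exp_pos hw g).ne' (Real.exp_ne_zero c), Real.log_exp]

lemma softV_le_softV_add (hw : 0 < w) {c : ℝ} (h : ∀ a, g a ≤ k a + c) :
    softV w g ≤ softV w k + c :=
  (softV_mono hw h).trans_eq (softV_add_const hw k c)

/-- The Gibbs (Boltzmann) policy of `g` with respect to the prior weights `w`, which need not be
normalized. -/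
noncomputable def gibbsPolicy (w g : A → ℝ) (a : A) : ℝ :=
  w a * Real.exp (g a - softV w g)

lemma gibbsPolicy_nonneg (hw : 0 ≤ w) (g : A → ℝ) : 0 ≤ gibbsPolicy w g :=
  fun a => mul_nonneg (hw a) (Real.exp_pos _).le

lemma sum_gibbsPolicy (hw : 0 < w) (g : A → ℝ) : ∑ a, gibbsPolicy w g a = 1 := by
  have hpos := sum_mul_exp_pos hw g
  simp only [gibbsPolicy, softV, Real.exp_sub, Real.exp_log hpos, ← mul_div_assoc,
    ← Finset.sum_div]
  exact div_self hpos.ne'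

/-- The entropy-regularized value of `g` under the policy `π`: the mean of `g` minus the relative
entropy of `π` with respect to `w`. Junk values give the usual convention that an action with
`π a = 0` contributes nothing. -/
noncomputable def regularizedValue (w π g : A → ℝ) : ℝ :=
  ∑ a, π a * (g a - Real.log (π a / w a))

lemma regularizedValue_gibbsPolicy (hw : 0 < w) (g : A → ℝ) :
    regularizedValue w (gibbsPolicy w g) g = softV w g := by
  have hterm (a : A) :
      gibbsPolicy w g a * (g a - Real.log (gibbsPolicy w g a / w a))
        = gibbsPolicy w g a * softV w g := by
    obtain ha | ha := eq_or_ne (w a) 0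
    · simp [gibbsPolicy, ha]
    · rw [gibbsPolicy, mul_div_cancel_left₀ _ ha, Real.log_exp, sub_sub_cancel]
  simp only [regularizedValue, hterm, ← Finset.sum_mul, sum_gibbsPolicy hw, one_mul]

lemma regularizedValue_le_add {π e : A → ℝ} {c : ℝ} (hπ_nonneg : 0 ≤ π) (hπ_sum : ∑ a, π a = 1)
    (h : ∀ a, g a ≤ k a + e a + c) :
    regularizedValue w π g ≤ regularizedValue w π k + ∑ a, π a * e a + c := by
  calc ∑ a, π a * (g a - Real.log (π a / w a))
      ≤ ∑ a, π a * (k a - Real.log (π a / w a) + e a + c) :=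
        Finset.sum_le_sum fun a _ =>
          mul_le_mul_of_nonneg_left (by linarith [h a]) (hπ_nonneg a)
    _ = regularizedValue w π k + ∑ a, π a * e a + c := by
        simp only [regularizedValue, mul_add, Finset.sum_add_distrib, ← Finset.sum_mul, hπ_sum,
          one_mul]

end SoftValue

section Bellman

variable {S A : Type*} [Fintype S] {γ : ℝ} {p : S → A → S → ℝ}

/-- The one-step backup `R + γ P V`. Each Bellman equation below has the form
`X = bellmanBackup γ p R V` with `V` a state value computed from `X`. -/
def bellmanBackup (γ : ℝ) (p : S → A → S → ℝ) (R : S → A → ℝ) (V : S → ℝ) : S → A → ℝ :=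
  fun s a => R s a + γ * ∑ s', p s a s' * V s'

lemma bellmanBackup_add (R R' : S → A → ℝ) (V V' : S → ℝ) :
    bellmanBackup γ p (R + R') (V + V') = bellmanBackup γ p R V + bellmanBackup γ p R' V' := by
  ext s a
  simp only [bellmanBackup, Pi.add_apply, mul_add, Finset.sum_add_distrib]
  ring

lemma bellmanBackup_le_add (hp_nonneg : ∀ s a s', 0 ≤ p s a s')
    (hp_sum : ∀ s a, ∑ s', p s a s' ≤ 1) (hγ0 : 0 ≤ γ) (R : S → A → ℝ) {V V' : S → ℝ} {M : ℝ}
    (hM : 0 ≤ M) (h : ∀ s, V s ≤ V' s + M) (s : S) (a : A) :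
    bellmanBackup γ p R V s a ≤ bellmanBackup γ p R V' s a + γ * M := by
  have hmean : ∑ s', p s a s' * V s' ≤ ∑ s', p s a s' * V' s' + M := by
    calc ∑ s', p s a s' * V s' ≤ ∑ s', p s a s' * (V' s' + M) :=
          Finset.sum_le_sum fun s' _ => mul_le_mul_of_nonneg_left (h s') (hp_nonneg s a s')
      _ = ∑ s', p s a s' * V' s' + (∑ s', p s a s') * M := by
          simp only [mul_add, Finset.sum_add_distrib, Finset.sum_mul]
      _ ≤ ∑ s', p s a s' * V' s' + M := by
          gcongr
          exact mul_le_of_le_one_left hM (hp_sum s a)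
  have := mul_le_mul_of_nonneg_left hmean hγ0
  simp only [bellmanBackup]
  linarith

-- At a maximum of `X - Y`, a positive value `M` would satisfy `M ≤ γ * M`.
lemma le_of_le_bellmanBackup_of_bellmanBackup_le [Finite A] (hp_nonneg : ∀ s a s', 0 ≤ p s a s')
    (hp_sum : ∀ s a, ∑ s', p s a s' ≤ 1) (hγ0 : 0 ≤ γ) (hγ1 : γ < 1) {R X Y : S → A → ℝ}
    {V V' : S → ℝ} (hX : X ≤ bellmanBackup γ p R V) (hY : bellmanBackup γ p R V' ≤ Y)
    (hV : ∀ s, ∀ M, 0 ≤ M → (∀ a, X s a ≤ Y s a + M) → V s ≤ V' s + M) : X ≤ Y := by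
  intro s a
  have : Nonempty (S × A) := ⟨(s, a)⟩
  obtain ⟨⟨s₀, a₀⟩, hmax⟩ := Finite.exists_max fun x : S × A => X x.1 x.2 - Y x.1 x.2
  set M := X s₀ a₀ - Y s₀ a₀
  have hXY (s : S) (a : A) : X s a ≤ Y s a + M := by linarith [hmax (s, a)]
  have hM : M ≤ 0 := by
    by_contra! hM_pos
    have hbackup := bellmanBackup_le_add hp_nonneg hp_sum hγ0 R hM_pos.le
      (fun s => hV s M hM_pos.le (hXY s)) s₀ a₀
    have hle : M ≤ γ * M := by linarith [hX s₀ a₀, hY s₀ a₀]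
    exact hle.not_gt (mul_lt_of_lt_one_left hM_pos hγ1)
  linarith [hXY s a]

end Bellman

lemma sum_mul_le_map_sum_smul_of_sum_le_one {ι E : Type*} [Fintype ι] [AddCommGroup E] [Module ℝ E]
    {K : Set E} {f : E → ℝ} (hf : ConcaveOn ℝ K f) (hK : 0 ∈ K) (hf0 : 0 ≤ f 0) {w : ι → ℝ}
    (hw : ∀ i, 0 ≤ w i) (hw_sum : ∑ i, w i ≤ 1) {x : ι → E} (hx : ∀ i, x i ∈ K) :
    ∑ i, w i * f (x i) ≤ f (∑ i, w i • x i) := by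
  have jensen := hf.map_add_sum_le (t := Finset.univ) (w := w) (p := x) (v := 1 - ∑ i, w i)
    (fun i _ => hw i) (sub_add_cancel _ _) (fun i _ => hx i) (sub_nonneg.mpr hw_sum) hK
  simp only [smul_eq_mul, smul_zero, zero_add] at jensen
  linarith [mul_nonneg (sub_nonneg.mpr hw_sum) hf0]

section Regret

variable {S A : Type*} [Fintype S] [Fintype A] {p : S → A → S → ℝ} {γ : ℝ} {π0 : S → A → ℝ}

lemma bellmanBackup_comp_le_comp (hp_nonneg : ∀ s a s', 0 ≤ p s a s')
    (hp_sum : ∀ s a, ∑ s', p s a s' ≤ 1) (hγ0 : 0 ≤ γ) (hγ1 : γ < 1) {f : ℝ → ℝ}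
    (hf_concave : ConcaveOn ℝ Set.univ f) (hf_superadd : ∀ x y, f x + f y ≤ f (x + y))
    (hf_superhom : ∀ x, γ * f x ≤ f (γ * x)) {r Q : S → A → ℝ}
    (hQ : Q = bellmanBackup γ p r fun s => softV (π0 s) (Q s))
    (hf_lse : ∀ s, softV (π0 s) (fun a => f (Q s a)) ≤ f (softV (π0 s) (Q s))) :
    bellmanBackup γ p (fun s a => f (r s a)) (fun s => softV (π0 s) fun a => f (Q s a))
      ≤ fun s a => f (Q s a) := by
  have hf0 : 0 ≤ f 0 := by
    have h := hf_superhom 0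
    rw [mul_zero] at h
    nlinarith
  intro s a
  calc f (r s a) + γ * ∑ s', p s a s' * softV (π0 s') (fun a' => f (Q s' a'))
      ≤ f (r s a) + γ * ∑ s', p s a s' * f (softV (π0 s') (Q s')) := by
        gcongr with s'
        · exact hp_nonneg s a s'
        · exact hf_lse s'
    _ ≤ f (r s a) + γ * f (∑ s', p s a s' * softV (π0 s') (Q s')) := by
        gcongr
        exact sum_mul_le_map_sum_smul_of_sum_le_one hf_concave (Set.mem_univ 0) hf0
          (hp_nonneg s a) (hp_sum s a) fun _ => Set.mem_univ _
    _ ≤ f (r s a) + f (γ * ∑ s', p s a s' * softV (π0 s') (Q s')) := by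
        gcongr
        exact hf_superhom _
    _ ≤ f (r s a + γ * ∑ s', p s a s' * softV (π0 s') (Q s')) := hf_superadd _ _
    _ = f (Q s a) := congrArg f (congrFun₂ hQ s a).symm

variable {R U Q : S → A → ℝ}

lemma softBellman_subsolution_le_supersolution (hp_nonneg : ∀ s a s', 0 ≤ p s a s')
    (hp_sum : ∀ s a, ∑ s', p s a s' ≤ 1) (hγ0 : 0 ≤ γ) (hγ1 : γ < 1) (hπ0 : ∀ s, 0 < π0 s)
    (hQ : Q ≤ bellmanBackup γ p R fun s => softV (π0 s) (Q s))
    (hU : bellmanBackup γ p R (fun s => softV (π0 s) (U s)) ≤ U) : Q ≤ U :=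
  le_of_le_bellmanBackup_of_bellmanBackup_le hp_nonneg hp_sum hγ0 hγ1 hQ hU
    fun s _ _ h => softV_le_softV_add (hπ0 s) h

lemma le_add_of_bellmanBackup_residual_amax_le [Nonempty A] (hp_nonneg : ∀ s a s', 0 ≤ p s a s')
    (hp_sum : ∀ s a, ∑ s', p s a s' ≤ 1) (hγ0 : 0 ≤ γ) (hγ1 : γ < 1) (hπ0 : ∀ s, 0 < π0 s)
    (hQ : bellmanBackup γ p R (fun s => softV (π0 s) (Q s)) ≤ Q) {C : S → A → ℝ}
    (hC : bellmanBackup γ p (U - bellmanBackup γ p R fun s => softV (π0 s) (U s))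
      (fun s => amax (C s)) ≤ C) : U ≤ Q + C := by
  set δ := U - bellmanBackup γ p R fun s => softV (π0 s) (U s)
  have hU : U = bellmanBackup γ p (R + δ) fun s => softV (π0 s) (U s) := by
    ext s a
    simp only [δ, bellmanBackup, Pi.add_apply, Pi.sub_apply]
    ring
  have hQC : bellmanBackup γ p (R + δ)
      ((fun s => softV (π0 s) (Q s)) + fun s => amax (C s)) ≤ Q + C :=
    (bellmanBackup_add _ _ _ _).trans_le (add_le_add hQ hC)
  refine le_of_le_bellmanBackup_of_bellmanBackup_le hp_nonneg hp_sum hγ0 hγ1 hU.le hQC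
    fun s M _ h => ?_
  rw [Pi.add_apply, add_assoc]
  refine softV_le_softV_add (hπ0 s) fun a => ?_
  have hmax : C s a ≤ amax (C s) := Finset.le_sup' (C s) (Finset.mem_univ a)
  have hs : U s a ≤ Q s a + C s a + M := h a
  linarith

lemma le_add_of_bellmanBackup_gibbsPolicy_le (hp_nonneg : ∀ s a s', 0 ≤ p s a s')
    (hp_sum : ∀ s a, ∑ s', p s a s' ≤ 1) (hγ0 : 0 ≤ γ) (hγ1 : γ < 1) (hπ0 : ∀ s, 0 < π0 s)
    {C Qπ D : S → A → ℝ} (hQ : Q ≤ bellmanBackup γ p R fun s => softV (π0 s) (Q s))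
    (hQU : Q ≤ U) (hUC : U ≤ Q + C)
    (hQπ : bellmanBackup γ p R
      (fun s => regularizedValue (π0 s) (gibbsPolicy (π0 s) (U s)) (Qπ s)) ≤ Qπ)
    (hD : bellmanBackup γ p 0
      (fun s => ∑ a, gibbsPolicy (π0 s) (U s) a * (C s a + D s a)) ≤ D) : Q ≤ Qπ + D := by
  have hQπD := (bellmanBackup_add _ _ _ _).trans_le (add_le_add hQπ hD)
  rw [add_zero] at hQπD
  refine le_of_le_bellmanBackup_of_bellmanBackup_le hp_nonneg hp_sum hγ0 hγ1 hQ hQπD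
    fun s M _ h => ?_
  have hU (a : A) : U s a ≤ Qπ s a + (C s a + D s a) + M := by
    have hUCs : U s a ≤ Q s a + C s a := hUC s a
    have hs : Q s a ≤ Qπ s a + D s a + M := h a
    linarith
  calc softV (π0 s) (Q s)
      ≤ softV (π0 s) (U s) := softV_mono (hπ0 s) (hQU s)
    _ = regularizedValue (π0 s) (gibbsPolicy (π0 s) (U s)) (U s) :=
        (regularizedValue_gibbsPolicy (hπ0 s) (U s)).symm
    _ ≤ _ := regularizedValue_le_add (gibbsPolicy_nonneg (hπ0 s).le (U s))
        (sum_gibbsPolicy (hπ0 s) (U s)) hU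

end Regret

theorem concave_conditions_regret_entreg_rl_general
    {S A : Type*} [Fintype S] [Fintype A] [Nonempty A]
    (p : S → A → S → ℝ)
    (hp_nonneg : ∀ s a s', 0 ≤ p s a s')
    (hp_sum : ∀ s a, ∑ s', p s a s' ≤ 1)
    (γ : ℝ) (hγ0 : 0 ≤ γ) (hγ1 : γ < 1)
    (π0 : S → A → ℝ)
    (hπ0 : ∀ s, 0 < π0 s)
    (r : S → A → ℝ)
    (Q : S → A → ℝ)
    (hQ : ∀ s a, Q s a = r s a + γ * ∑ s', p s a s' * softV (π0 s') (fun a' => Q s' a'))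
    (f : ℝ → ℝ)
    (hf_concave : ConcaveOn ℝ Set.univ f)
    (hf_superadd : ∀ x y, f x + f y ≤ f (x + y))
    (hf_superhom : ∀ x, γ * f x ≤ f (γ * x))
    (hf_lse : ∀ (𝒬 : S → A → ℝ) (s : S),
      softV (π0 s) (fun a => f (𝒬 s a)) ≤ f (softV (π0 s) (fun a => 𝒬 s a)))
    (Qt : S → A → ℝ)
    (hQt : ∀ s a, Qt s a = f (r s a) + γ * ∑ s', p s a s' * softV (π0 s') (fun a' => Qt s' a'))
    (Vf : S → ℝ)
    (hVf : ∀ s, Vf s = softV (π0 s) (fun a => f (Q s a)))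
    (Ch : S → A → ℝ)
    (hCh : ∀ s a, Ch s a = f (Q s a) - f (r s a) - γ * (∑ s', p s a s' * Vf s')
      + γ * ∑ s', p s a s' * amax (fun a' => Ch s' a'))
    (πf : S → A → ℝ)
    (hπf : ∀ s a, πf s a = π0 s a * Real.exp (f (Q s a) - Vf s))
    (Qpf : S → A → ℝ)
    (hQpf : ∀ s a, Qpf s a = f (r s a) + γ * ∑ s', p s a s' *
      ∑ a', πf s' a' * (Qpf s' a' - Real.log (πf s' a' / π0 s' a')))
    (Dh : S → A → ℝ)
    (hDh : ∀ s a, Dh s a = γ * ∑ s', p s a s' *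
      ∑ a', πf s' a' * (Ch s' a' + Dh s' a')) :
    ∀ s a, Qt s a - Qpf s a ≤ Dh s a := by
  obtain rfl : Vf = fun s => softV (π0 s) fun a => f (Q s a) := funext hVf
  obtain rfl : πf = fun s => gibbsPolicy (π0 s) fun a => f (Q s a) := funext₂ hπf
  have hQt_fix : Qt = bellmanBackup γ p (fun s a => f (r s a)) fun s => softV (π0 s) (Qt s) :=
    funext₂ hQt
  have hsuper := bellmanBackup_comp_le_comp hp_nonneg hp_sum hγ0 hγ1 hf_concave hf_superadd
    hf_superhom (funext₂ hQ) (hf_lse Q)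
  have hQt_le := softBellman_subsolution_le_supersolution hp_nonneg hp_sum hγ0 hγ1 hπ0 hQt_fix.le
    hsuper
  have hC : Ch = bellmanBackup γ p ((fun s a => f (Q s a)) - bellmanBackup γ p
      (fun s a => f (r s a)) fun s => softV (π0 s) fun a => f (Q s a)) fun s => amax (Ch s) :=
    funext₂ fun s a => (hCh s a).trans (by rw [sub_sub]; rfl)
  have hle_add := le_add_of_bellmanBackup_residual_amax_le hp_nonneg hp_sum hγ0 hγ1 hπ0
    hQt_fix.ge hC.ge
  have hregret := le_add_of_bellmanBackup_gibbsPolicy_le hp_nonneg hp_sum hγ0 hγ1 hπ0 hQt_fix.le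
    hQt_le hle_add (funext₂ hQpf).ge (funext₂ fun s a => (hDh s a).trans (zero_add _).symm).ge
  exact fun s a => sub_le_iff_le_add'.mpr (hregret s a)

/-- **Regret bound for the zero-shot policy, concave conditions, entropy-regularized RL
(Lemma 5.4).** -/
theorem concave_conditions_regret_entreg_rl
    {S A : Type*} [Fintype S] [Fintype A] [Nonempty S] [Nonempty A]
    (p : S → A → S → ℝ)
    (hp_nonneg : ∀ s a s', 0 ≤ p s a s')
    (hp_sum : ∀ s a, ∑ s', p s a s' = 1)
    (γ : ℝ) (hγ0 : 0 < γ) (hγ1 : γ < 1)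
    -- prior policy
    (π0 : S → A → ℝ)
    (hπ0_pos : ∀ s a, 0 < π0 s a)
    (hπ0_sum : ∀ s, ∑ a, π0 s a = 1)
    (r : S → A → ℝ)
    -- Q is the optimal soft Q-function for reward r
    (Q : S → A → ℝ)
    (hQ : ∀ s a, Q s a = r s a + γ * ∑ s', p s a s' * softV (π0 s') (fun a' => Q s' a'))
    -- the transformation function f and its conditions
    (f : ℝ → ℝ)
    (hf_concave : ConcaveOn ℝ Set.univ f)
    (hf_superadd : ∀ x y, f x + f y ≤ f (x + y))
    (hf_superhom : ∀ x, γ * f x ≤ f (γ * x))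
    (hf_lse : ∀ (𝒬 : S → A → ℝ) (s : S),
      softV (π0 s) (fun a => f (𝒬 s a)) ≤ f (softV (π0 s) (fun a => 𝒬 s a)))
    -- Q̃ is the optimal soft Q-function for the transformed reward f ∘ r
    (Qt : S → A → ℝ)
    (hQt : ∀ s a, Qt s a = f (r s a) + γ * ∑ s', p s a s' * softV (π0 s') (fun a' => Qt s' a'))
    -- V_f and the fixed point Ĉ
    (Vf : S → ℝ)
    (hVf : ∀ s, Vf s = softV (π0 s) (fun a => f (Q s a)))
    (Ch : S → A → ℝ)
    (hCh : ∀ s a, Ch s a = f (Q s a) - f (r s a) - γ * (∑ s', p s a s' * Vf s')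
      + γ * ∑ s', p s a s' * amax (fun a' => Ch s' a'))
    -- the zero-shot policy π_f
    (πf : S → A → ℝ)
    (hπf : ∀ s a, πf s a = π0 s a * Real.exp (f (Q s a) - Vf s))
    -- Q̃^{π_f}, the soft value of π_f on the transformed task
    (Qpf : S → A → ℝ)
    (hQpf : ∀ s a, Qpf s a = f (r s a) + γ * ∑ s', p s a s' *
      ∑ a', πf s' a' * (Qpf s' a' - Real.log (πf s' a' / π0 s' a')))
    -- the fixed point D̂
    (Dh : S → A → ℝ)
    (hDh : ∀ s a, Dh s a = γ * ∑ s', p s a s' *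
      ∑ a', πf s' a' * (Ch s' a' + Dh s' a')) :
    ∀ s a, Qt s a - Qpf s a ≤ Dh s a := by
  exact concave_conditions_regret_entreg_rl_general p hp_nonneg (fun s a => (hp_sum s a).le)
    γ hγ0.le hγ1 π0 (fun s => lt_of_strongLT (hπ0_pos s)) r Q hQ f hf_concave hf_superadd
    hf_superhom hf_lse Qt hQt Vf hVf Ch hCh πf hπf Qpf hQpf Dh hDh
end
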